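/- Let τ ∈ [0,1] and n ≥ 1. For every partition π of {1,…,n} with k blocks of sizes n_1,…,n_k, one has m_n(A_π) = p_τ(π), where p_τ(π) = (1−τ)^{k−1} · τ^{n−k} · ∏_{i=1}^k (n_i − 1)! / ∏_{j=1}^{n−1}((1−τ)+jτ). In particular m_n(A_π) depends only on the multiset of block sizes of π. -/

import Mathlib

open MeasureTheory

noncomputable section

/-- The circle `ℝ/ℤ`. -/
abbrev Circle1 : Type := AddCircle (1 : ℝ)

/-- The Pólya-urn type Markov kernel
`κ_n(x, ·) = ((1−τ)·λ + τ·Σ_{i=1}^n δ_{x_i}) / ((1−τ) + nτ)`. -/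
def urnKernel (τ : ℝ) {n : ℕ} (x : Fin n → Circle1) : Measure Circle1 :=
  (ENNReal.ofReal ((1 - τ) + n * τ))⁻¹ •
    (ENNReal.ofReal (1 - τ) • (volume : Measure Circle1)
      + ENNReal.ofReal τ • ∑ i : Fin n, Measure.dirac (x i))

/-- The urn measures: `m 1 = λ` and `m (n+1)` is the image of the measure–kernel
product `m n ⊗ κ_n` under `(x, y) ↦ (x_1, …, x_n, y)`.  (`m 0` is a dummy value.) -/
def urnMeasure (τ : ℝ) : (n : ℕ) → Measure (Fin n → Circle1)
  | 0 => Measure.dirac (fun i => i.elim0)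
  | 1 => (volume : Measure Circle1).map (fun y => fun _ : Fin 1 => y)
  | (n + 2) =>
      (urnMeasure τ (n + 1)).bind
        (fun x => (urnKernel τ x).map (Fin.snoc x))

/-- For a partition `π` of `{1,…,n}`, the set `A_π` of `x` with `x i = x j` iff `i`
and `j` lie in the same block of `π`. -/
def samePartSet {n : ℕ} (P : Finpartition (Finset.univ : Finset (Fin n))) :
    Set (Fin n → Circle1) :=
  {x | ∀ i j : Fin n, x i = x j ↔ ∃ B ∈ P.parts, i ∈ B ∧ j ∈ B}

/-- The Ewens weight of a partition `π` of `{1,…,n}` with `k` blocks of sizes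
`n_1,…,n_k`:
`p_τ(π) = (1−τ)^{k−1} · τ^{n−k} · ∏_i (n_i − 1)! / ∏_{j=1}^{n−1}((1−τ)+jτ)`. -/
def ewens (τ : ℝ) (n : ℕ) (P : Finpartition (Finset.univ : Finset (Fin n))) : ℝ :=
  ((1 - τ) ^ (P.parts.card - 1) * τ ^ (n - P.parts.card) *
    ∏ B ∈ P.parts, ((B.card - 1).factorial : ℝ)) /
    ∏ j ∈ Finset.Icc 1 (n - 1), ((1 - τ) + (j : ℝ) * τ)

/-!
Remove the last index from a partition `P` of `{1, …, n + 1}`, and let `m` be the number of other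
indices in its block. Given that the first `n` draws realize the restricted partition, the last draw
completes the pattern `P` iff it avoids all earlier values (`m = 0`; probability proportional to
`1 - τ`, as the base measure does not charge points) or hits the one value already taken `m` times
(probability proportional to `τ m`). The Ewens weights satisfy the same recursion, because adding an
element to a block of size `m` multiplies `(m - 1)!` by `m`.
-/

variable {α β : Type*}

lemma card_eq_card_add_one_of_range_eq_compl_singleton [Fintype α] [Fintype β] {f : α ↪ β} {b : β}
    (hf : Set.range f = {b}ᶜ) : Fintype.card β = Fintype.card α + 1 := by
  rw [← Nat.card_eq_fintype_card (α := β), ← Set.ncard_add_ncard_compl {b}, ← hf,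
    Set.ncard_singleton, Set.ncard_range_of_injective f.injective, Nat.card_eq_fintype_card,
    add_comm]

section Restriction

variable [Fintype α] [DecidableEq β] {f : α ↪ β} {b : β}

/-- The trace on `α` of a block `B`, where `α` is regarded as a subset of `β` through `f`. -/
def blockTrace (f : α ↪ β) (B : Finset β) : Finset α := {i | f i ∈ B}

@[simp]
lemma mem_blockTrace {B : Finset β} {i : α} : i ∈ blockTrace f B ↔ f i ∈ B := by
  simp [blockTrace]

lemma map_blockTrace (hf : Set.range f = {b}ᶜ) (B : Finset β) :
    (blockTrace f B).map f = B.erase b := by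
  ext y
  have hy : (∃ i, f i = y) ↔ y ≠ b := by simpa using Set.ext_iff.1 hf y
  simp only [Finset.mem_map, mem_blockTrace, Finset.mem_erase, ← hy]
  grind

lemma card_blockTrace_of_notMem (hf : Set.range f = {b}ᶜ) {B : Finset β}
    (hb : b ∉ B) : (blockTrace f B).card = B.card := by
  rw [← Finset.card_map f, map_blockTrace hf, Finset.erase_eq_of_notMem hb]

lemma card_blockTrace_add_one_of_mem (hf : Set.range f = {b}ᶜ) {B : Finset β}
    (hb : b ∈ B) : (blockTrace f B).card + 1 = B.card := by
  rw [← Finset.card_map f, map_blockTrace hf, Finset.card_erase_add_one hb]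

variable [Fintype β]

lemma eq_of_blockTrace_eq {P : Finpartition (Finset.univ : Finset β)} {B C : Finset β}
    (hB : B ∈ P.parts) (hC : C ∈ P.parts) (hBne : (blockTrace f B).Nonempty)
    (h : blockTrace f B = blockTrace f C) : B = C := by
  obtain ⟨i, hi⟩ := hBne
  exact P.eq_of_mem_parts hB hC (mem_blockTrace.1 hi) (mem_blockTrace.1 (h ▸ hi))

lemma notMem_of_mem_erase_part {P : Finpartition (Finset.univ : Finset β)}
    {B : Finset β} (hB : B ∈ P.parts.erase (P.part b)) : b ∉ B := fun hb =>
  Finset.ne_of_mem_erase hB (P.part_eq_of_mem (Finset.mem_of_mem_erase hB) hb).symm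

lemma blockTrace_nonempty_of_mem_erase_part (hf : Set.range f = {b}ᶜ)
    {P : Finpartition (Finset.univ : Finset β)} {B : Finset β} (hB : B ∈ P.parts.erase (P.part b)) :
    (blockTrace f B).Nonempty := by
  rw [← Finset.card_pos, card_blockTrace_of_notMem hf (notMem_of_mem_erase_part hB),
    Finset.card_pos]
  exact P.nonempty_of_mem_parts (Finset.mem_of_mem_erase hB)

lemma injOn_blockTrace_erase_part (hf : Set.range f = {b}ᶜ)
    (P : Finpartition (Finset.univ : Finset β)) :
    Set.InjOn (blockTrace f) (P.parts.erase (P.part b) : Set (Finset β)) := fun _ hB _ hC =>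
  eq_of_blockTrace_eq (Finset.mem_of_mem_erase hB) (Finset.mem_of_mem_erase hC)
    (blockTrace_nonempty_of_mem_erase_part hf hB)

variable [DecidableEq α]

/-- The restriction to `α` of a partition of `β`, along an embedding `f : α ↪ β`: its blocks are
the nonempty traces of the blocks of `P`. -/
def comapPartition (f : α ↪ β) (P : Finpartition (Finset.univ : Finset β)) :
    Finpartition (Finset.univ : Finset α) :=
  Finpartition.ofExistsUnique ((P.parts.image (blockTrace f)).erase ∅)
    (fun _ _ => Finset.subset_univ _)
    (fun i _ => by
      have hi : f i ∈ P.part (f i) := P.mem_part (Finset.mem_univ _)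
      refine ⟨blockTrace f (P.part (f i)), ⟨?_, mem_blockTrace.2 hi⟩, ?_⟩
      · exact Finset.mem_erase.2 ⟨Finset.ne_empty_of_mem (mem_blockTrace.2 hi),
          Finset.mem_image_of_mem _ (P.part_mem.2 (Finset.mem_univ _))⟩
      · rintro C ⟨hC, hiC⟩
        obtain ⟨B, hB, rfl⟩ := Finset.mem_image.1 (Finset.mem_of_mem_erase hC)
        rw [P.part_eq_of_mem hB (mem_blockTrace.1 hiC)])
    (Finset.notMem_erase _ _)

lemma parts_comapPartition (f : α ↪ β) (P : Finpartition (Finset.univ : Finset β)) :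
    (comapPartition f P).parts = (P.parts.image (blockTrace f)).erase ∅ := rfl

lemma blockTrace_mem_parts_comapPartition {P : Finpartition (Finset.univ : Finset β)}
    {B : Finset β} (hB : B ∈ P.parts) (hne : (blockTrace f B).Nonempty) :
    blockTrace f B ∈ (comapPartition f P).parts :=
  Finset.mem_erase.2 ⟨hne.ne_empty, Finset.mem_image_of_mem _ hB⟩

lemma part_comapPartition (f : α ↪ β) (P : Finpartition (Finset.univ : Finset β)) (i : α) :
    (comapPartition f P).part i = blockTrace f (P.part (f i)) := by
  have hi : i ∈ blockTrace f (P.part (f i)) := mem_blockTrace.2 (P.mem_part (Finset.mem_univ _))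
  exact (comapPartition f P).part_eq_of_mem
    (blockTrace_mem_parts_comapPartition (P.part_mem.2 (Finset.mem_univ _)) ⟨i, hi⟩) hi

lemma parts_comapPartition_erase (hf : Set.range f = {b}ᶜ)
    (P : Finpartition (Finset.univ : Finset β)) :
    (comapPartition f P).parts.erase (blockTrace f (P.part b)) =
      (P.parts.erase (P.part b)).image (blockTrace f) := by
  ext C
  simp only [parts_comapPartition, Finset.mem_erase, Finset.mem_image]
  constructor
  · rintro ⟨hCb, -, B, hB, rfl⟩
    exact ⟨B, ⟨fun h => hCb (h ▸ rfl), hB⟩, rfl⟩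
  · rintro ⟨B, ⟨hBb, hB⟩, rfl⟩
    have hne := blockTrace_nonempty_of_mem_erase_part hf (Finset.mem_erase.2 ⟨hBb, hB⟩)
    have hb : P.part b ∈ P.parts := P.part_mem.2 (Finset.mem_univ b)
    exact ⟨fun h => hBb (eq_of_blockTrace_eq hB hb hne h), hne.ne_empty, B, hB, rfl⟩

lemma card_parts_eq_card_erase_add_one (hf : Set.range f = {b}ᶜ)
    (P : Finpartition (Finset.univ : Finset β)) :
    P.parts.card = ((comapPartition f P).parts.erase (blockTrace f (P.part b))).card + 1 := by
  rw [parts_comapPartition_erase hf, Finset.card_image_of_injOn (injOn_blockTrace_erase_part hf P),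
    Finset.card_erase_add_one (P.part_mem.2 (Finset.mem_univ b))]

lemma prod_parts_eq_mul_prod_erase {M : Type*} [CommMonoid M] (hf : Set.range f = {b}ᶜ)
    (P : Finpartition (Finset.univ : Finset β)) (g : ℕ → M) :
    ∏ B ∈ P.parts, g B.card = g ((blockTrace f (P.part b)).card + 1) *
      ∏ C ∈ (comapPartition f P).parts.erase (blockTrace f (P.part b)), g C.card := by
  rw [parts_comapPartition_erase hf, Finset.prod_image (injOn_blockTrace_erase_part hf P),
    card_blockTrace_add_one_of_mem hf (P.mem_part (Finset.mem_univ b)),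
    ← Finset.mul_prod_erase _ _ (P.part_mem.2 (Finset.mem_univ b))]
  congr 1
  exact Finset.prod_congr rfl fun B hB => by
    rw [card_blockTrace_of_notMem hf (notMem_of_mem_erase_part hB)]

end Restriction

section Ewens

/-- The unnormalized Ewens weight `(1−τ)^{k−1} τ^{n−k} ∏ (nᵢ − 1)!` of a partition of an
`n`-element type into `k` blocks of sizes `nᵢ`. -/
def ewensNumerator (τ : ℝ) [Fintype α] [DecidableEq α]
    (P : Finpartition (Finset.univ : Finset α)) : ℝ :=
  (1 - τ) ^ (P.parts.card - 1) * τ ^ (Fintype.card α - P.parts.card) *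
    ∏ B ∈ P.parts, ((B.card - 1).factorial : ℝ)

/-- The unnormalized weight with which a new element joins an existing block of size `m`;
`m = 0` encodes that it opens a block of its own. -/
def joinWeight (τ : ℝ) (m : ℕ) : ℝ := if m = 0 then 1 - τ else τ * m

lemma joinWeight_nonneg {τ : ℝ} (hτ0 : 0 ≤ τ) (hτ1 : τ ≤ 1) (m : ℕ) : 0 ≤ joinWeight τ m := by
  unfold joinWeight
  split_ifs
  · exact sub_nonneg.2 hτ1
  · positivity

variable [Fintype α] [DecidableEq α] [Fintype β] [DecidableEq β]

lemma one_le_card_parts [Nonempty α] (P : Finpartition (Finset.univ : Finset α)) :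
    1 ≤ P.parts.card :=
  Finset.card_pos.2 (P.parts_nonempty Finset.univ_nonempty.ne_empty)

lemma ewensNumerator_eq_joinWeight_mul [Nonempty α] (τ : ℝ) {f : α ↪ β} {b : β}
    (hf : Set.range f = {b}ᶜ) (P : Finpartition (Finset.univ : Finset β)) :
    ewensNumerator τ P =
      joinWeight τ (blockTrace f (P.part b)).card * ewensNumerator τ (comapPartition f P) := by
  have hprod := prod_parts_eq_mul_prod_erase hf P fun m => ((m - 1).factorial : ℝ)
  have hcard := card_parts_eq_card_erase_add_one hf P
  have hpos := one_le_card_parts (comapPartition f P)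
  have hle : (comapPartition f P).parts.card ≤ Fintype.card α :=
    (comapPartition f P).card_parts_le_card
  rw [ewensNumerator, ewensNumerator, hprod, card_eq_card_add_one_of_range_eq_compl_singleton hf]
  rcases (blockTrace f (P.part b)).eq_empty_or_nonempty with hopen | hjoin
  · rw [hopen, Finset.erase_eq_of_notMem (comapPartition f P).empty_notMem_parts] at hcard ⊢
    obtain ⟨k, hk⟩ := Nat.exists_eq_add_of_le' hpos
    simp only [hcard, hk, joinWeight, Finset.card_empty, if_true, Nat.add_sub_add_right,
      Nat.add_sub_cancel, zero_add, Nat.sub_self, Nat.factorial_zero, Nat.cast_one]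
    ring
  · have hmem : blockTrace f (P.part b) ∈ (comapPartition f P).parts :=
      blockTrace_mem_parts_comapPartition (P.part_mem.2 (Finset.mem_univ b)) hjoin
    rw [Finset.card_erase_add_one hmem] at hcard
    rw [hcard, ← Finset.mul_prod_erase _ _ hmem, Nat.succ_sub hle, pow_succ]
    obtain ⟨m, hm⟩ := Nat.exists_eq_add_of_le' hjoin.card_pos
    simp only [joinWeight, hm, Nat.add_sub_cancel, Nat.factorial_succ, Nat.succ_ne_zero, if_false]
    push_cast
    ring

lemma ewens_eq_ewensNumerator_div (τ : ℝ) (n : ℕ)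
    (P : Finpartition (Finset.univ : Finset (Fin n))) :
    ewens τ n P = ewensNumerator τ P / ∏ j ∈ Finset.Icc 1 (n - 1), ((1 - τ) + (j : ℝ) * τ) := by
  rw [ewens, ewensNumerator, Fintype.card_fin]

lemma range_castSuccEmb (n : ℕ) :
    Set.range (Fin.castSuccEmb : Fin n ↪ Fin (n + 1)) = {Fin.last n}ᶜ := by
  ext i
  exact Fin.exists_castSucc_eq

/-- The urn's conditional probability that the last element is placed as `P` prescribes, given that
the preceding ones realize the restriction of `P`. -/
def predictiveProb (τ : ℝ) {n : ℕ} (P : Finpartition (Finset.univ : Finset (Fin (n + 1)))) : ℝ :=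
  joinWeight τ (blockTrace Fin.castSuccEmb (P.part (Fin.last n))).card / ((1 - τ) + n * τ)

lemma predictiveProb_nonneg {τ : ℝ} (hτ0 : 0 ≤ τ) (hτ1 : τ ≤ 1) {n : ℕ}
    (P : Finpartition (Finset.univ : Finset (Fin (n + 1)))) : 0 ≤ predictiveProb τ P :=
  div_nonneg (joinWeight_nonneg hτ0 hτ1 _)
    (add_nonneg (sub_nonneg.2 hτ1) (mul_nonneg n.cast_nonneg hτ0))

lemma ewens_succ (τ : ℝ) {n : ℕ} (hn : 1 ≤ n)
    (P : Finpartition (Finset.univ : Finset (Fin (n + 1)))) :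
    ewens τ (n + 1) P = predictiveProb τ P * ewens τ n (comapPartition Fin.castSuccEmb P) := by
  obtain ⟨n, rfl⟩ := Nat.exists_eq_add_of_le' hn
  rw [predictiveProb, ewens_eq_ewensNumerator_div, ewens_eq_ewensNumerator_div,
    ewensNumerator_eq_joinWeight_mul τ (range_castSuccEmb _), div_mul_div_comm,
    Nat.add_sub_cancel, Nat.add_sub_cancel, Finset.prod_Icc_succ_top (by lia),
    mul_comm (∏ _ ∈ _, _)]

lemma ewens_one (τ : ℝ) (P : Finpartition (Finset.univ : Finset (Fin 1))) : ewens τ 1 P = 1 := by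
  have hcard : P.parts.card = 1 :=
    le_antisymm (by simpa using P.card_parts_le_card) (one_le_card_parts P)
  have hblock : ∀ B ∈ P.parts, ((B.card - 1).factorial : ℝ) = 1 := fun B _ => by
    simp [Nat.sub_eq_zero_of_le (show B.card ≤ 1 by simpa using B.card_le_univ)]
  simp [ewens, hcard, Finset.prod_congr rfl hblock]

end Ewens

variable {E : Type*}

section CoincidenceSet

variable [Fintype α] [DecidableEq α]

/-- The set of `x : α → E` whose fibres are exactly the blocks of `P`; it generalizes
`samePartSet` to an arbitrary index type and state space. -/
def coincidenceSet (E : Type*) (P : Finpartition (Finset.univ : Finset α)) : Set (α → E) :=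
  {x | ∀ i j, x i = x j ↔ ∃ B ∈ P.parts, i ∈ B ∧ j ∈ B}

lemma mem_coincidenceSet {P : Finpartition (Finset.univ : Finset α)} {x : α → E} :
    x ∈ coincidenceSet E P ↔ ∀ i j, x i = x j ↔ i ∈ P.part j := by
  simp only [coincidenceSet, Set.mem_ofPred_eq, Finpartition.mem_part_iff_exists]

lemma coincidenceSet_eq_univ [Subsingleton α] (P : Finpartition (Finset.univ : Finset α)) :
    coincidenceSet E P = Set.univ := by
  refine Set.eq_univ_of_forall fun x => mem_coincidenceSet.2 fun i j => ?_
  rw [Subsingleton.elim j i]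
  exact iff_of_true rfl (P.mem_part (Finset.mem_univ i))

lemma measurableSet_coincidenceSet [MeasurableSpace E] [MeasurableEq E]
    (P : Finpartition (Finset.univ : Finset α)) : MeasurableSet (coincidenceSet E P) := by
  simp only [coincidenceSet, Set.ofPred_forall]
  exact .iInter fun i => .iInter fun j =>
    (measurableSet_eq_fun (measurable_pi_apply i) (measurable_pi_apply j)).iff (.const _)

variable {n : ℕ} {P : Finpartition (Finset.univ : Finset (Fin (n + 1)))} {x : Fin n → E}

lemma snoc_mem_coincidenceSet {y : E} :
    (Fin.snoc x y : Fin (n + 1) → E) ∈ coincidenceSet E P ↔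
      x ∈ coincidenceSet E (comapPartition Fin.castSuccEmb P) ∧
        ∀ i, x i = y ↔ i ∈ blockTrace Fin.castSuccEmb (P.part (Fin.last n)) := by
  simp only [mem_coincidenceSet, part_comapPartition, mem_blockTrace, Fin.coe_castSuccEmb]
  have part_comm (i j) : i ∈ P.part j ↔ j ∈ P.part i := by
    simp only [Finpartition.mem_part_iff_exists, and_comm]
  constructor
  · intro h
    exact ⟨fun i j => by simpa using h i.castSucc j.castSucc,
      fun i => by simpa using h i.castSucc (Fin.last n)⟩
  · rintro ⟨hx, hy⟩ i j
    cases i using Fin.lastCases <;> cases j using Fin.lastCases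
    · simp
    · rw [part_comm, ← hy, Fin.snoc_last, Fin.snoc_castSucc, eq_comm]
    · rw [← hy, Fin.snoc_last, Fin.snoc_castSucc]
    · rw [← hx, Fin.snoc_castSucc, Fin.snoc_castSucc]

lemma apply_eq_iff_mem_blockTrace (hx : x ∈ coincidenceSet E (comapPartition Fin.castSuccEmb P))
    {i : Fin n} (hi : i ∈ blockTrace Fin.castSuccEmb (P.part (Fin.last n))) (j : Fin n) :
    x j = x i ↔ j ∈ blockTrace Fin.castSuccEmb (P.part (Fin.last n)) := by
  rw [mem_coincidenceSet.1 hx, part_comapPartition,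
    P.part_eq_of_mem (P.part_mem.2 (Finset.mem_univ _)) (mem_blockTrace.1 hi)]

lemma snoc_preimage_coincidenceSet_of_blockTrace_eq_empty
    (hx : x ∈ coincidenceSet E (comapPartition Fin.castSuccEmb P))
    (hP : blockTrace Fin.castSuccEmb (P.part (Fin.last n)) = ∅) :
    (Fin.snoc x · : E → Fin (n + 1) → E) ⁻¹' coincidenceSet E P = (Set.range x)ᶜ := by
  ext y
  simp [snoc_mem_coincidenceSet, hx, hP]

lemma snoc_preimage_coincidenceSet_of_mem_blockTrace
    (hx : x ∈ coincidenceSet E (comapPartition Fin.castSuccEmb P))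
    {i : Fin n} (hi : i ∈ blockTrace Fin.castSuccEmb (P.part (Fin.last n))) :
    (Fin.snoc x · : E → Fin (n + 1) → E) ⁻¹' coincidenceSet E P = {x i} := by
  ext y
  simp only [Set.mem_preimage, snoc_mem_coincidenceSet, hx, true_and, Set.mem_singleton_iff]
  constructor
  · exact fun h => ((h i).2 hi).symm
  · rintro rfl
    exact apply_eq_iff_mem_blockTrace hx hi

end CoincidenceSet

section PolyaUrn

variable [MeasurableSpace E] (μ : Measure E) (τ : ℝ) {n : ℕ}

/-- The Blackwell–MacQueen urn kernel with base measure `μ`; `urnKernel` is the case of Lebesgue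
measure on the circle. -/
def polyaKernel (x : Fin n → E) : Measure E :=
  (ENNReal.ofReal ((1 - τ) + n * τ))⁻¹ •
    (ENNReal.ofReal (1 - τ) • μ + ENNReal.ofReal τ • ∑ i : Fin n, Measure.dirac (x i))

/-- The law of the first `n` draws from the Blackwell–MacQueen urn with base measure `μ`. The first
draw is separate because `polyaKernel μ 1` is not a probability measure when `n = 0`. -/
def polyaMeasure : (n : ℕ) → Measure (Fin n → E)
  | 0 => Measure.dirac (fun i => i.elim0)
  | 1 => μ.map (fun y => fun _ : Fin 1 => y)
  | (n + 2) => (polyaMeasure (n + 1)).bind (fun x => (polyaKernel μ τ x).map (Fin.snoc x))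

lemma polyaMeasure_succ (hn : 1 ≤ n) :
    polyaMeasure μ τ (n + 1) =
      (polyaMeasure μ τ n).bind (fun x => (polyaKernel μ τ x).map (Fin.snoc x)) := by
  obtain ⟨n, rfl⟩ := Nat.exists_eq_add_of_le' hn
  rfl

lemma polyaKernel_apply (x : Fin n → E) {s : Set E} (hs : MeasurableSet s) :
    polyaKernel μ τ x s = (ENNReal.ofReal ((1 - τ) + n * τ))⁻¹ *
      (ENNReal.ofReal (1 - τ) * μ s + ENNReal.ofReal τ * ∑ i, s.indicator 1 (x i)) := by
  simp only [polyaKernel, Measure.smul_apply, Measure.add_apply, Measure.finsetSum_apply,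
    smul_eq_mul, Measure.dirac_apply' _ hs]

lemma measurable_snoc {X : Fin (n + 1) → Type*} [∀ i, MeasurableSpace (X i)] :
    Measurable fun p : (∀ i : Fin n, X i.castSucc) × X (Fin.last n) => Fin.snoc p.1 p.2 := by
  refine measurable_pi_iff.2 fun i => ?_
  cases i using Fin.lastCases with
  | last => simpa only [Fin.snoc_last] using measurable_snd
  | cast i =>
    simp only [Fin.snoc_castSucc]
    exact (measurable_pi_apply i).comp measurable_fst

lemma measurable_snoc_right (x : Fin n → E) :
    Measurable (Fin.snoc x · : E → Fin (n + 1) → E) :=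
  measurable_snoc.comp measurable_prodMk_left

lemma measurable_map_snoc_polyaKernel [SFinite μ] :
    Measurable fun x : Fin n → E =>
      ((polyaKernel μ τ x).map (Fin.snoc x) : Measure (Fin (n + 1) → E)) := by
  refine Measure.measurable_of_measurable_coe _ fun s hs => ?_
  simp only [Measure.map_apply (measurable_snoc_right _) hs,
    polyaKernel_apply μ τ _ (measurable_snoc_right _ hs)]
  refine .const_mul (.add (.const_mul ?_ _)
    (.const_mul (Finset.measurable_sum _ fun i _ => ?_) _)) _
  · exact measurable_measure_prodMk_left (measurable_snoc hs)
  · exact (measurable_one.indicator hs).comp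
      (measurable_snoc.comp (measurable_id.prodMk (measurable_pi_apply i)))

variable {τ}

lemma urn_normalizer_pos (hτ0 : 0 ≤ τ) (hn : 1 ≤ n) : 0 < (1 - τ) + n * τ := by
  have : (1 : ℝ) ≤ n := mod_cast hn
  nlinarith

variable [NullSingletonClass μ]

lemma polyaKernel_singleton [MeasurableSingletonClass E] (hpos : 0 < (1 - τ) + n * τ)
    (hτ0 : 0 ≤ τ) {x : Fin n → E} {e : E} {s : Finset (Fin n)} (hs : ∀ i, x i = e ↔ i ∈ s) :
    polyaKernel μ τ x {e} = ENNReal.ofReal (τ * s.card / ((1 - τ) + n * τ)) := by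
  have hcount : ∑ i, ({e} : Set E).indicator (1 : E → ENNReal) (x i) = s.card := by
    classical
    simp [Set.indicator_apply, hs]
  rw [polyaKernel_apply μ τ x (measurableSet_singleton e), hcount, measure_singleton, mul_zero,
    zero_add, ENNReal.ofReal_div_of_pos hpos, ENNReal.ofReal_mul hτ0, ENNReal.ofReal_natCast,
    ENNReal.div_eq_inv_mul]

variable [IsProbabilityMeasure μ]

lemma polyaKernel_compl_range [MeasurableSingletonClass E] (hpos : 0 < (1 - τ) + n * τ)
    (x : Fin n → E) :
    polyaKernel μ τ x (Set.range x)ᶜ = ENNReal.ofReal ((1 - τ) / ((1 - τ) + n * τ)) := by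
  have hrange : MeasurableSet (Set.range x) := (Set.finite_range x).measurableSet
  have hμ : μ (Set.range x)ᶜ = 1 :=
    (prob_compl_eq_one_iff hrange).2 ((Set.finite_range x).measure_zero μ)
  rw [polyaKernel_apply μ τ x hrange.compl, hμ, ENNReal.ofReal_div_of_pos hpos,
    ENNReal.div_eq_inv_mul]
  simp

variable [MeasurableEq E]

lemma polyaKernel_snoc_preimage_coincidenceSet (hτ0 : 0 ≤ τ) (hn : 1 ≤ n)
    {P : Finpartition (Finset.univ : Finset (Fin (n + 1)))} {x : Fin n → E}
    (hx : x ∈ coincidenceSet E (comapPartition Fin.castSuccEmb P)) :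
    polyaKernel μ τ x ((Fin.snoc x · : E → Fin (n + 1) → E) ⁻¹' coincidenceSet E P) =
      ENNReal.ofReal (predictiveProb τ P) := by
  have hpos := urn_normalizer_pos hτ0 hn
  rcases (blockTrace Fin.castSuccEmb (P.part (Fin.last n))).eq_empty_or_nonempty with
    hopen | ⟨i, hi⟩
  · rw [snoc_preimage_coincidenceSet_of_blockTrace_eq_empty hx hopen,
      polyaKernel_compl_range μ hpos, predictiveProb, hopen, Finset.card_empty, joinWeight,
      if_pos rfl]
  · rw [snoc_preimage_coincidenceSet_of_mem_blockTrace hx hi,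
      polyaKernel_singleton μ hpos hτ0 (apply_eq_iff_mem_blockTrace hx hi), predictiveProb,
      joinWeight, if_neg (Finset.card_ne_zero_of_mem hi)]

lemma map_snoc_polyaKernel_coincidenceSet (hτ0 : 0 ≤ τ) (hn : 1 ≤ n)
    (P : Finpartition (Finset.univ : Finset (Fin (n + 1)))) (x : Fin n → E) :
    ((polyaKernel μ τ x).map (Fin.snoc x) : Measure (Fin (n + 1) → E)) (coincidenceSet E P) =
      (coincidenceSet E (comapPartition Fin.castSuccEmb P)).indicator
        (fun _ => ENNReal.ofReal (predictiveProb τ P)) x := by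
  rw [Measure.map_apply (measurable_snoc_right x) (measurableSet_coincidenceSet P)]
  by_cases hx : x ∈ coincidenceSet E (comapPartition Fin.castSuccEmb P)
  · rw [Set.indicator_of_mem hx]
    exact polyaKernel_snoc_preimage_coincidenceSet μ hτ0 hn hx
  · have hempty : (Fin.snoc x · : E → Fin (n + 1) → E) ⁻¹' coincidenceSet E P = ∅ :=
      Set.eq_empty_of_forall_notMem fun y hy => hx (snoc_mem_coincidenceSet.1 hy).1
    rw [Set.indicator_of_notMem hx, hempty, measure_empty]

lemma polyaMeasure_succ_coincidenceSet (hτ0 : 0 ≤ τ) (hn : 1 ≤ n)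
    (P : Finpartition (Finset.univ : Finset (Fin (n + 1)))) :
    polyaMeasure μ τ (n + 1) (coincidenceSet E P) =
      ENNReal.ofReal (predictiveProb τ P) *
        polyaMeasure μ τ n (coincidenceSet E (comapPartition Fin.castSuccEmb P)) := by
  rw [polyaMeasure_succ μ τ hn, Measure.bind_apply (measurableSet_coincidenceSet P)
    (measurable_map_snoc_polyaKernel μ τ).aemeasurable]
  simp only [map_snoc_polyaKernel_coincidenceSet μ hτ0 hn]
  exact lintegral_indicator_const (measurableSet_coincidenceSet _) _

end PolyaUrn

theorem urnMeasure_samePartSet_eq_ewens_general [MeasurableSpace E] [MeasurableEq E]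
    (μ : Measure E) [IsProbabilityMeasure μ] [NullSingletonClass μ] {τ : ℝ} (hτ0 : 0 ≤ τ)
    (hτ1 : τ ≤ 1) {n : ℕ} (hn : 1 ≤ n) (P : Finpartition (Finset.univ : Finset (Fin n))) :
    polyaMeasure μ τ n (coincidenceSet E P) = ENNReal.ofReal (ewens τ n P) := by
  induction n, hn using Nat.le_induction with
  | base =>
    rw [coincidenceSet_eq_univ, ewens_one, polyaMeasure,
      Measure.map_apply (by fun_prop) MeasurableSet.univ]
    simp
  | succ n hn ih =>
    rw [polyaMeasure_succ_coincidenceSet μ hτ0 hn, ih, ewens_succ τ hn,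
      ENNReal.ofReal_mul (predictiveProb_nonneg hτ0 hτ1 P)]

lemma urnMeasure_eq_polyaMeasure (τ : ℝ) : ∀ n, urnMeasure τ n = polyaMeasure volume τ n
  | 0 => rfl
  | 1 => rfl
  | n + 2 => by
    rw [urnMeasure, urnMeasure_eq_polyaMeasure τ (n + 1)]
    rfl

instance isProbabilityMeasure_volume_circle1 : IsProbabilityMeasure (volume : Measure Circle1) :=
  ⟨by rw [AddCircle.measure_univ, ENNReal.ofReal_one]⟩

instance nullSingletonClass_volume_circle1 : NullSingletonClass (volume : Measure Circle1) :=
  ⟨fun y => by simpa using AddCircle.volume_closedBall (T := 1) (x := y) 0⟩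

/-- for every partition `π` of `{1,…,n}`, `m_n(A_π) = p_τ(π)`, the Ewens
weight; in particular `m_n(A_π)` depends only on the block sizes of `π`. -/
theorem urnMeasure_samePartSet_eq_ewens (τ : ℝ) (hτ0 : 0 ≤ τ) (hτ1 : τ ≤ 1)
    (n : ℕ) (hn : 1 ≤ n)
    (P : Finpartition (Finset.univ : Finset (Fin n))) :
    urnMeasure τ n (samePartSet P) = ENNReal.ofReal (ewens τ n P) := by
  rw [urnMeasure_eq_polyaMeasure]
  exact urnMeasure_samePartSet_eq_ewens_general volume hτ0 hτ1 hn P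

end
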